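/- arXiv:1110.5627 — 2 statements merged into one kernel-verified Lean document; each statement's English description precedes it below -/
import Mathlib

section
/- Let g be a finite-dimensional real Lie algebra with a norm, and let γ, δ : [0,1] → g be continuous paths. Define the continuous path ε : [0,1] → g by ε(t) = γ(t) + A_γ(t)(δ(t)). Then A_ε(t) = A_γ(t) ∘ A_δ(t) for all t ∈ [0,1]. -/
/-- `IsLieBracket B` says that the bilinear map `B = ⁅·,·⁆` makes the
(finite-dimensional, normed) real vector space `g` into a real Lie algebra:
it is alternating and satisfies the Jacobi identity (in Leibniz form). -/
def IsLieBracket {g : Type*} [NormedAddCommGroup g] [NormedSpace ℝ g]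
    (B : g →ₗ[ℝ] g →ₗ[ℝ] g) : Prop :=
  (∀ x : g, B x x = 0) ∧
  (∀ x y z : g, B x (B y z) = B (B x y) z + B y (B x z))

/-- The adjoint endomorphism `ad x = ⁅x, ·⁆` as a continuous linear map. -/
noncomputable def adL {g : Type*} [NormedAddCommGroup g] [NormedSpace ℝ g]
    [FiniteDimensional ℝ g] (B : g →ₗ[ℝ] g →ₗ[ℝ] g) (x : g) : g →L[ℝ] g :=
  LinearMap.toContinuousLinearMap (B x)

/-- `IsTransport B γ A` says that `A : [0,1] → End(g)` is a continuously
differentiable path of linear endomorphisms of `g` with `A 0 = id` and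
`A' t = ad (γ t) ∘ A t` for `t ∈ [0,1]` (one-sided derivatives at the
endpoints, and the derivative is continuous on `[0,1]`). -/
def IsTransport {g : Type*} [NormedAddCommGroup g] [NormedSpace ℝ g]
    [FiniteDimensional ℝ g] (B : g →ₗ[ℝ] g →ₗ[ℝ] g)
    (γ : ℝ → g) (A : ℝ → (g →L[ℝ] g)) : Prop :=
  A 0 = 1 ∧
  (∀ t ∈ Set.Icc (0:ℝ) 1,
    HasDerivWithinAt A ((adL B (γ t)).comp (A t)) (Set.Icc (0:ℝ) 1) t) ∧
  ContinuousOn (fun t => (adL B (γ t)).comp (A t)) (Set.Icc (0:ℝ) 1)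

/-- The path `A_γ : [0,1] → End(g)`, i.e. the unique continuously differentiable
solution of `A 0 = id`, `A' t = ad (γ t) ∘ A t` (chosen via choice; for a
continuous path `γ` it exists and is unique on `[0,1]`). -/
noncomputable def transport {g : Type*} [NormedAddCommGroup g] [NormedSpace ℝ g]
    [FiniteDimensional ℝ g] (B : g →ₗ[ℝ] g →ₗ[ℝ] g) (γ : ℝ → g) :
    ℝ → (g →L[ℝ] g) :=
  letI := Classical.propDecidable (∃ A : ℝ → (g →L[ℝ] g), IsTransport B γ A)
  if h : ∃ A : ℝ → (g →L[ℝ] g), IsTransport B γ A then h.choose else fun _ => 1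

/-!
By the Leibniz identity, `t ↦ A_γ(t)[x, y]` and `t ↦ [A_γ(t) x, A_γ(t) y]` solve the same linear
differential equation `u' = [γ, u]`, so `A_γ(t)` preserves the bracket. Therefore
`A_γ ∘ ad δ = ad (A_γ δ) ∘ A_γ`, and the product rule gives
`(A_γ ∘ A_δ)' = ad γ ∘ A_γ ∘ A_δ + A_γ ∘ ad δ ∘ A_δ = ad (γ + A_γ δ) ∘ (A_γ ∘ A_δ)`.
This is the initial value problem that defines `A_ε`.
-/

open Set
open scoped NNReal

section IntegralCurve

variable {E : Type*} [NormedAddCommGroup E] [NormedSpace ℝ E]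
  {u w : ℝ → E} {v : ℝ → E → E} {s s' : Set ℝ} {a b c : ℝ} {K : ℝ≥0}

theorem isIntegralCurveOn_congr (hu : IsIntegralCurveOn u v s) (h : EqOn w u s) :
    IsIntegralCurveOn w v s := fun t ht => by
  rw [h ht]
  exact (hu t ht).congr h (h ht)

theorem isIntegralCurveOn_union (hs : IsClosed s) (hs' : IsClosed s')
    (h : IsIntegralCurveOn u v s) (h' : IsIntegralCurveOn u v s') :
    IsIntegralCurveOn u v (s ∪ s') := by
  have hasDerivWithinAt_of_isClosed {r : Set ℝ} (hr : IsClosed r) (hu : IsIntegralCurveOn u v r)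
      (t : ℝ) : HasDerivWithinAt u (v t (u t)) r t := by
    by_cases ht : t ∈ r
    · exact hu t ht
    · exact HasFDerivWithinAt.of_notMem_closure (by rwa [hr.closure_eq])
  exact fun t _ =>
    (hasDerivWithinAt_of_isClosed hs h t).union (hasDerivWithinAt_of_isClosed hs' h' t)

theorem isIntegralCurveOn_Icc_piecewise (hac : a ≤ c) (hcb : c ≤ b)
    (hu : IsIntegralCurveOn u v (Icc a c)) (hw : IsIntegralCurveOn w v (Icc c b))
    (h : u c = w c) : IsIntegralCurveOn ((Iic c).piecewise u w) v (Icc a b) := by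
  have eqOn_left : EqOn ((Iic c).piecewise u w) u (Icc a c) :=
    (piecewise_eqOn _ _ _).mono Icc_subset_Iic_self
  have eqOn_right : EqOn ((Iic c).piecewise u w) w (Icc c b) := fun t ht => by
    rcases ht.1.eq_or_lt with rfl | hct
    · rw [piecewise_eq_of_mem _ _ _ self_mem_Iic, h]
    · exact piecewise_eq_of_notMem _ _ _ (notMem_Iic.2 hct)
  rw [← Icc_union_Icc_eq_Icc hac hcb]
  exact isIntegralCurveOn_union isClosed_Icc isClosed_Icc
    (isIntegralCurveOn_congr hu eqOn_left) (isIntegralCurveOn_congr hw eqOn_right)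

theorem eqOn_Icc_of_isIntegralCurveOn (hlip : ∀ t ∈ Icc a b, LipschitzWith K (v t))
    (hu : IsIntegralCurveOn u v (Icc a b)) (hw : IsIntegralCurveOn w v (Icc a b))
    (h : u a = w a) : EqOn u w (Icc a b) := by
  have hasDerivWithinAt_Ici {f : ℝ → E} (hf : IsIntegralCurveOn f v (Icc a b)) :
      ∀ t ∈ Ico a b, HasDerivWithinAt f (v t (f t)) (Ici t) t := fun t ht =>
    (hf t (Ico_subset_Icc_self ht)).mono_of_mem_nhdsWithin (Icc_mem_nhdsGE_of_mem ht)
  exact ODE_solution_unique_of_mem_Icc_right (s := fun _ => univ)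
    (fun t ht => (hlip t (Ico_subset_Icc_self ht)).lipschitzOnWith)
    hu.continuousOn (hasDerivWithinAt_Ici hu) (fun _ _ => mem_univ _)
    hw.continuousOn (hasDerivWithinAt_Ici hw) (fun _ _ => mem_univ _) h

variable [CompleteSpace E]

theorem exists_isIntegralCurveOn_Icc_of_two_mul_le_one (hab : a ≤ b)
    (hlip : ∀ t ∈ Icc a b, LipschitzWith K (v t)) (hcont : ∀ x, ContinuousOn (v · x) (Icc a b))
    (hK : 2 * (K * (b - a)) ≤ 1) (x₀ : E) :
    ∃ u : ℝ → E, u a = x₀ ∧ IsIntegralCurveOn u v (Icc a b) := by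
  obtain ⟨M, hM⟩ := isCompact_Icc.exists_bound_of_continuousOn (hcont x₀)
  have hM₀ : 0 ≤ M := (norm_nonneg _).trans (hM a (left_mem_Icc.2 hab))
  have hlen : 0 ≤ b - a := sub_nonneg.2 hab
  -- On the ball of radius `r` the field is bounded by `M + K * r`, so a solution started at the
  -- centre stays inside as soon as `(M + K * r) * (b - a) ≤ r`.
  lift M to ℝ≥0 using hM₀
  lift b - a to ℝ≥0 using hlen with ℓ hℓ
  set r : ℝ≥0 := 2 * M * ℓ
  have hpl : IsPicardLindelof v (⟨a, left_mem_Icc.2 hab⟩ : Icc a b) x₀ r 0 (M + K * r) K :=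
    { lipschitzOnWith := fun t ht => (hlip t ht).lipschitzOnWith
      continuousOn := fun x _ => hcont x
      norm_le := fun t ht x hx => by
        have hdist : ‖v t x - v t x₀‖ ≤ K * r :=
          ((hlip t ht).norm_sub_le x x₀).trans (by gcongr; exact mem_closedBall_iff_norm.1 hx)
        calc ‖v t x‖ ≤ ‖v t x₀‖ + ‖v t x - v t x₀‖ := norm_le_norm_add_norm_sub' _ _
          _ ≤ M + K * r := add_le_add (hM t ht) hdist
      mul_max_le := by
        have hKr : 2 * (K * ℓ) * (M * ℓ) ≤ 1 * (M * ℓ : ℝ) := by gcongr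
        simp only [sub_self, ← hℓ, r]
        push_cast
        rw [max_eq_left ℓ.coe_nonneg]
        linarith }
  exact hpl.exists_eq_forall_mem_Icc_hasDerivWithinAt₀

theorem exists_isIntegralCurveOn_Icc_of_lipschitzWith (hab : a ≤ b)
    (hlip : ∀ t ∈ Icc a b, LipschitzWith K (v t)) (hcont : ∀ x, ContinuousOn (v · x) (Icc a b))
    (x₀ : E) : ∃ u : ℝ → E, u a = x₀ ∧ IsIntegralCurveOn u v (Icc a b) := by
  obtain ⟨n, hn⟩ := pow_unbounded_of_one_lt (2 * (K * (b - a))) one_lt_two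
  replace hn := hn.le
  induction n generalizing a b x₀ with
  | zero =>
    rw [pow_zero] at hn
    exact exists_isIntegralCurveOn_Icc_of_two_mul_le_one hab hlip hcont hn x₀
  | succ n ih =>
    set c := (a + b) / 2 with hc
    rw [pow_succ] at hn
    have hac : a ≤ c := by linarith
    have hcb : c ≤ b := by linarith
    have hleft : Icc a c ⊆ Icc a b := Icc_subset_Icc_right hcb
    have hright : Icc c b ⊆ Icc a b := Icc_subset_Icc_left hac
    obtain ⟨u, hua, hu⟩ := ih hac (fun t ht => hlip t (hleft ht))
      (fun x => (hcont x).mono hleft) x₀ (by rw [hc]; linarith)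
    obtain ⟨w, hwc, hw⟩ := ih hcb (fun t ht => hlip t (hright ht))
      (fun x => (hcont x).mono hright) (u c) (by rw [hc]; linarith)
    exact ⟨(Iic c).piecewise u w, (piecewise_eq_of_mem (Iic c) u w hac).trans hua,
      isIntegralCurveOn_Icc_piecewise hac hcb hu hw hwc.symm⟩

end IntegralCurve

section LinearODE

variable {E : Type*} [NormedAddCommGroup E] [NormedSpace ℝ E]
  {L : ℝ → E →L[ℝ] E} {a b : ℝ}

theorem exists_lipschitzWith_of_continuousOn_clm {X F : Type*} [TopologicalSpace X]
    [NormedAddCommGroup F] [NormedSpace ℝ F] {L : X → E →L[ℝ] F} {s : Set X}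
    (hs : IsCompact s) (hL : ContinuousOn L s) :
    ∃ K : ℝ≥0, ∀ t ∈ s, LipschitzWith K (L t) := by
  obtain ⟨C, hC⟩ := hs.exists_bound_of_continuousOn hL
  exact ⟨C.toNNReal, fun t ht => (L t).lipschitz.weaken (NNReal.le_toNNReal_of_coe_le (hC t ht))⟩

theorem eqOn_Icc_of_isIntegralCurveOn_clm {u w : ℝ → E} (hL : ContinuousOn L (Icc a b))
    (hu : IsIntegralCurveOn u (fun t => L t) (Icc a b))
    (hw : IsIntegralCurveOn w (fun t => L t) (Icc a b)) (h : u a = w a) :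
    EqOn u w (Icc a b) := by
  obtain ⟨K, hK⟩ := exists_lipschitzWith_of_continuousOn_clm isCompact_Icc hL
  exact eqOn_Icc_of_isIntegralCurveOn hK hu hw h

theorem exists_isIntegralCurveOn_Icc_clm [CompleteSpace E] (hab : a ≤ b)
    (hL : ContinuousOn L (Icc a b)) (x₀ : E) :
    ∃ u : ℝ → E, u a = x₀ ∧ IsIntegralCurveOn u (fun t => L t) (Icc a b) := by
  obtain ⟨K, hK⟩ := exists_lipschitzWith_of_continuousOn_clm isCompact_Icc hL
  exact exists_isIntegralCurveOn_Icc_of_lipschitzWith hab hK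
    (fun _ => hL.clm_apply continuousOn_const) x₀

end LinearODE

section Transport

/-- `IsLeftLeibniz B` says that every left multiplication `B x` is a derivation of `B`, i.e. that
`B` makes `g` into a left Leibniz algebra. This is the Jacobi identity without antisymmetry. -/
def IsLeftLeibniz {R g : Type*} [CommRing R] [AddCommGroup g] [Module R g]
    (B : g →ₗ[R] g →ₗ[R] g) : Prop :=
  ∀ x y z : g, B x (B y z) = B (B x y) z + B y (B x z)

variable {g : Type*} [NormedAddCommGroup g] [NormedSpace ℝ g] [FiniteDimensional ℝ g]
  {B : g →ₗ[ℝ] g →ₗ[ℝ] g} {γ δ : ℝ → g} {A A' D : ℝ → g →L[ℝ] g}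

theorem adL_add (x y : g) : adL B (x + y) = adL B x + adL B y := by
  simp only [adL, map_add]

theorem continuous_adL : Continuous (adL B) :=
  B.toContinuousBilinearMap.continuous

theorem comp_adL_of_map_bracket {T : g →L[ℝ] g} {x : g}
    (hT : ∀ y, T (B x y) = B (T x) (T y)) : T.comp (adL B x) = (adL B (T x)).comp T :=
  ContinuousLinearMap.ext hT

theorem continuousOn_compL_adL {s : Set ℝ} (hγ : ContinuousOn γ s) :
    ContinuousOn (fun t => ContinuousLinearMap.compL ℝ g g g (adL B (γ t))) s :=
  (ContinuousLinearMap.compL ℝ g g g).continuous.comp_continuousOn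
    (continuous_adL.comp_continuousOn hγ)

namespace IsTransport

theorem isIntegralCurveOn (hA : IsTransport B γ A) :
    IsIntegralCurveOn A (fun t => ContinuousLinearMap.compL ℝ g g g (adL B (γ t))) (Icc 0 1) :=
  hA.2.1

theorem continuousOn (hA : IsTransport B γ A) : ContinuousOn A (Icc 0 1) :=
  hA.isIntegralCurveOn.continuousOn

theorem of_isIntegralCurveOn (hγ : ContinuousOn γ (Icc 0 1)) (hA₀ : A 0 = 1)
    (hA : IsIntegralCurveOn A (fun t => ContinuousLinearMap.compL ℝ g g g (adL B (γ t)))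
      (Icc 0 1)) : IsTransport B γ A :=
  ⟨hA₀, hA, (continuous_adL.comp_continuousOn hγ).clm_comp hA.continuousOn⟩

theorem eqOn (hγ : ContinuousOn γ (Icc 0 1)) (hA : IsTransport B γ A)
    (hA' : IsTransport B γ A') : EqOn A A' (Icc 0 1) :=
  eqOn_Icc_of_isIntegralCurveOn_clm (continuousOn_compL_adL hγ) hA.isIntegralCurveOn
    hA'.isIntegralCurveOn (hA.1.trans hA'.1.symm)

theorem isIntegralCurveOn_apply (hA : IsTransport B γ A) (x : g) :
    IsIntegralCurveOn (fun t => A t x) (fun t => adL B (γ t)) (Icc 0 1) := fun t ht =>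
  (ContinuousLinearMap.apply ℝ g x).hasFDerivAt.comp_hasDerivWithinAt t (hA.2.1 t ht)

theorem isIntegralCurveOn_bracket_apply (hB : IsLeftLeibniz B) (hA : IsTransport B γ A)
    (x y : g) :
    IsIntegralCurveOn (fun t => B (A t x) (A t y)) (fun t => adL B (γ t)) (Icc 0 1) :=
  fun t ht =>
    (B.toContinuousBilinearMap.hasDerivWithinAt_of_bilinear (hA.isIntegralCurveOn_apply x t ht)
      (hA.isIntegralCurveOn_apply y t ht)).congr_deriv <|
        (add_comm _ _).trans (hB (γ t) (A t x) (A t y)).symm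

theorem map_bracket (hB : IsLeftLeibniz B) (hγ : ContinuousOn γ (Icc 0 1))
    (hA : IsTransport B γ A) {t : ℝ} (ht : t ∈ Icc (0 : ℝ) 1) (x y : g) :
    A t (B x y) = B (A t x) (A t y) :=
  eqOn_Icc_of_isIntegralCurveOn_clm (continuous_adL.comp_continuousOn hγ)
    (hA.isIntegralCurveOn_apply (B x y)) (hA.isIntegralCurveOn_bracket_apply hB x y)
    (by simp [hA.1]) ht

theorem mul (hB : IsLeftLeibniz B) (hγ : ContinuousOn γ (Icc 0 1))
    (hδ : ContinuousOn δ (Icc 0 1)) (hA : IsTransport B γ A) (hD : IsTransport B δ D) :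
    IsTransport B (fun t => γ t + A t (δ t)) (fun t => (A t).comp (D t)) := by
  refine of_isIntegralCurveOn (hγ.add (hA.continuousOn.clm_apply hδ))
    (by rw [hA.1, hD.1]; rfl) fun t ht => ?_
  refine ((hA.2.1 t ht).clm_comp (hD.2.1 t ht)).congr_deriv ?_
  have hcomm : (A t).comp (adL B (δ t)) = (adL B (A t (δ t))).comp (A t) :=
    comp_adL_of_map_bracket (hA.map_bracket hB hγ ht (δ t))
  calc ((adL B (γ t)).comp (A t)).comp (D t) + (A t).comp ((adL B (δ t)).comp (D t))
      = ((adL B (γ t)).comp (A t)).comp (D t) + ((adL B (A t (δ t))).comp (A t)).comp (D t) := by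
        rw [← hcomm]; rfl
    _ = (adL B (γ t + A t (δ t))).comp ((A t).comp (D t)) := by rw [adL_add]; rfl

end IsTransport

theorem isTransport_transport (hγ : ContinuousOn γ (Icc 0 1)) :
    IsTransport B γ (transport B γ) := by
  have : CompleteSpace g := FiniteDimensional.complete ℝ g
  obtain ⟨A, hA₀, hA⟩ :=
    exists_isIntegralCurveOn_Icc_clm zero_le_one (continuousOn_compL_adL (B := B) hγ) 1
  have hex : ∃ A, IsTransport B γ A := ⟨A, .of_isIntegralCurveOn hγ hA₀ hA⟩
  rw [transport, dif_pos hex]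
  exact hex.choose_spec

theorem transport_mul_general (hB : IsLeftLeibniz B) (hγ : ContinuousOn γ (Icc 0 1))
    (hδ : ContinuousOn δ (Icc 0 1)) :
    ∀ t ∈ Icc (0 : ℝ) 1, transport B (fun s => γ s + transport B γ s (δ s)) t
      = (transport B γ t).comp (transport B δ t) := by
  have hA : IsTransport B γ (transport B γ) := isTransport_transport hγ
  have hD : IsTransport B δ (transport B δ) := isTransport_transport hδ
  have hε : ContinuousOn (fun s => γ s + transport B γ s (δ s)) (Icc 0 1) :=
    hγ.add (hA.continuousOn.clm_apply hδ)
  exact (isTransport_transport hε).eqOn hε (hA.mul hB hγ hδ hD)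

end Transport

/-- Cocycle property: if `ε = γ · δ` is the product path,
`ε t = γ t + A_γ(t) (δ t)`, then `A_ε(t) = A_γ(t) ∘ A_δ(t)` for all `t ∈ [0,1]`. -/
theorem transport_mul {g : Type*}
    [NormedAddCommGroup g] [NormedSpace ℝ g] [FiniteDimensional ℝ g]
    (B : g →ₗ[ℝ] g →ₗ[ℝ] g) (hB : IsLieBracket B)
    (γ δ : ℝ → g) (hγ : ContinuousOn γ (Set.Icc 0 1))
    (hδ : ContinuousOn δ (Set.Icc 0 1)) :
    ∀ t ∈ Set.Icc (0:ℝ) 1,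
      transport B (fun s => γ s + transport B γ s (δ s)) t
        = (transport B γ t).comp (transport B δ t) :=
  transport_mul_general hB.2 hγ hδ
end

section
/- Let g be a finite-dimensional real Lie algebra with a norm, and let P(g) = C([0,1], g) be the Banach space of continuous paths [0,1] → g equipped with the supremum norm. Then the multiplication map P(g) × P(g) → P(g), (γ, δ) ↦ γ·δ where (γ·δ)(t) = γ(t) + A_γ(t)(δ(t)), and the inversion map P(g) → P(g), γ ↦ ι(γ) where ι(γ)(t) = −A_γ(t)⁻¹(γ(t)), are infinitely differentiable (C^∞) maps of Banach spaces; in particular P(g) with this multiplication is a Banach Lie group. -/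
/-- Extension of a continuous path `[0,1] → g` to all of `ℝ` (constant outside `[0,1]`). -/
noncomputable def pathExt {g : Type*} [TopologicalSpace g]
    (γ : C(Set.Icc (0:ℝ) 1, g)) : ℝ → g :=
  Set.IccExtend zero_le_one ⇑γ

/-- The Duistermaat–Kolk multiplication of paths: `(γ · δ)(t) = γ t + A_γ(t) (δ t)`,
as a `g`-valued function on `[0,1]`. -/
noncomputable def pathMul {g : Type*} [NormedAddCommGroup g] [NormedSpace ℝ g]
    [FiniteDimensional ℝ g] (B : g →ₗ[ℝ] g →ₗ[ℝ] g)
    (γ δ : C(Set.Icc (0:ℝ) 1, g)) : Set.Icc (0:ℝ) 1 → g :=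
  fun t => γ t + transport B (pathExt γ) t (δ t)

/-- The Duistermaat–Kolk inversion of paths: `ι(γ)(t) = -A_γ(t)⁻¹ (γ t)`,
as a `g`-valued function on `[0,1]`. -/
noncomputable def pathInv {g : Type*} [NormedAddCommGroup g] [NormedSpace ℝ g]
    [FiniteDimensional ℝ g] (B : g →ₗ[ℝ] g →ₗ[ℝ] g)
    (γ : C(Set.Icc (0:ℝ) 1, g)) : Set.Icc (0:ℝ) 1 → g :=
  fun t => -(Ring.inverse (transport B (pathExt γ) t) (γ t))

/-!
Left transport in `End(g)` is a linear differential equation, so it suffices to show that the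
solution of `x' = L x`, `x(0) = x₀` on `[0,1]` depends analytically on the path of operators `L`.
The equation is equivalent to `(1 - V_L) x = x₀`, where `V_L f (t) = ∫₀ᵗ L(s) f(s) ds` is a
Volterra operator, linear in `L`. Since `‖V_Lⁿ‖ ≤ ‖L‖ⁿ / n!`, the operator `1 - V_L` is always
invertible, and inversion in a Banach algebra is analytic. The inverse `C` of the transport `A` is
obtained in the same way, from the linear equation `C' = -C ∘ ad γ`.
-/

open scoped unitInterval ContDiff Nat

theorem isUnit_one_sub_of_norm_pow_le {R : Type*} [NormedRing R] [CompleteSpace R] {u : ℕ → ℝ}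
    {x : R} (hu : Summable u) (h : ∀ n, ‖x ^ n‖ ≤ u n) : IsUnit (1 - x) :=
  have pow_summable : Summable (x ^ ·) := hu.of_norm_bounded h
  ⟨⟨1 - x, ∑' n : ℕ, x ^ n, pow_summable.one_sub_mul_tsum_pow,
    pow_summable.tsum_pow_mul_one_sub⟩, rfl⟩

section PointwiseApply

variable (𝕜 X E F : Type*) [NontriviallyNormedField 𝕜] [TopologicalSpace X] [CompactSpace X]
  [NormedAddCommGroup E] [NormedSpace 𝕜 E] [NormedAddCommGroup F] [NormedSpace 𝕜 F]

/-- Pointwise evaluation `(L, f) ↦ (x ↦ L x (f x))` of a continuous family of operators on a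
continuous function, as a bounded bilinear map for the supremum norms. -/
noncomputable def pointwiseApply : C(X, E →L[𝕜] F) →L[𝕜] C(X, E) →L[𝕜] C(X, F) :=
  LinearMap.mkContinuous₂
    (LinearMap.mk₂ 𝕜 (fun (L : C(X, E →L[𝕜] F)) (f : C(X, E)) =>
        (⟨fun x => L x (f x), by fun_prop⟩ : C(X, F)))
      (fun _ _ _ => by ext; simp) (fun _ _ _ => by ext; simp)
      (fun _ _ _ => by ext; simp) (fun _ _ _ => by ext; simp)) 1 fun L f => by
    rw [one_mul, ContinuousMap.norm_le _ (by positivity)]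
    exact fun x => (L x).le_of_opNorm_le_of_le (L.norm_coe_le_norm x) (f.norm_coe_le_norm x)

variable {𝕜 X E F}

@[simp]
theorem pointwiseApply_apply (L : C(X, E →L[𝕜] F)) (f : C(X, E)) (x : X) :
    pointwiseApply 𝕜 X E F L f x = L x (f x) :=
  rfl

end PointwiseApply

section PathExt

variable {F : Type*}

@[simp]
theorem pathExt_coe [TopologicalSpace F] (f : C(I, F)) (t : I) : pathExt f t = f t :=
  Set.IccExtend_val _ _ t

theorem continuous_pathExt [TopologicalSpace F] (f : C(I, F)) : Continuous (pathExt f) :=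
  f.continuous.Icc_extend'

theorem norm_pathExt_le [NormedAddCommGroup F] (f : C(I, F)) (t : ℝ) : ‖pathExt f t‖ ≤ ‖f‖ :=
  f.norm_coe_le_norm _

end PathExt

section Primitive

variable (F : Type*) [NormedAddCommGroup F] [NormedSpace ℝ F]

/-- The operator `f ↦ (t ↦ ∫₀ᵗ f)` on the Banach space of paths `[0,1] → F`. -/
noncomputable def primitiveCLM : C(I, F) →L[ℝ] C(I, F) :=
  LinearMap.mkContinuous
    { toFun := fun f =>
        ⟨fun t => ∫ s in (0 : ℝ)..t, pathExt f s,
          (intervalIntegral.continuous_primitive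
            (fun _ _ => (continuous_pathExt f).intervalIntegrable _ _) 0).comp
            continuous_subtype_val⟩
      map_add' := fun f h => by
        ext t
        exact intervalIntegral.integral_add ((continuous_pathExt f).intervalIntegrable _ _)
          ((continuous_pathExt h).intervalIntegrable _ _)
      map_smul' := fun c f => by
        ext t
        exact intervalIntegral.integral_smul c (pathExt f) } 1 fun f => by
    rw [one_mul, ContinuousMap.norm_le _ (norm_nonneg f)]
    intro t
    calc ‖∫ s in (0 : ℝ)..t, pathExt f s‖ ≤ ‖f‖ * |(t : ℝ) - 0| :=
          intervalIntegral.norm_integral_le_of_norm_le_const fun s _ => norm_pathExt_le f s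
      _ ≤ ‖f‖ := by
          rw [sub_zero, abs_of_nonneg t.2.1]
          exact mul_le_of_le_one_right (norm_nonneg f) t.2.2

end Primitive

section LinearODE

variable {F : Type*} [NormedAddCommGroup F] [NormedSpace ℝ F]

/-- The Volterra operator `f ↦ (t ↦ ∫₀ᵗ L(s) f(s) ds)`, whose fixed points modulo constants are the
solutions of `x' = L x`. -/
noncomputable def volterraOperator (L : C(I, F →L[ℝ] F)) : C(I, F) →L[ℝ] C(I, F) :=
  primitiveCLM F ∘L pointwiseApply ℝ I F F L

theorem norm_volterraOperator_pow_apply_le (L : C(I, F →L[ℝ] F)) (n : ℕ) (f : C(I, F)) (t : I) :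
    ‖(volterraOperator L ^ n) f t‖ ≤ ‖L‖ ^ n / n ! * ‖f‖ * (t : ℝ) ^ n := by
  induction n generalizing t with
  | zero => simpa using f.norm_coe_le_norm t
  | succ n ih =>
    let fₙ := (volterraOperator L ^ n) f
    have integrand_le (s : ℝ) (hs : s ∈ Set.Ioc 0 (t : ℝ)) :
        ‖pathExt (pointwiseApply ℝ I F F L fₙ) s‖ ≤ ‖L‖ ^ (n + 1) / n ! * ‖f‖ * s ^ n := by
      lift s to I using ⟨hs.1.le, hs.2.trans t.2.2⟩
      calc ‖pathExt (pointwiseApply ℝ I F F L fₙ) s‖ = ‖L s (fₙ s)‖ := by simp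
        _ ≤ ‖L‖ * (‖L‖ ^ n / n ! * ‖f‖ * s ^ n) :=
            (L s).le_of_opNorm_le_of_le (L.norm_coe_le_norm s) (ih s)
        _ = ‖L‖ ^ (n + 1) / n ! * ‖f‖ * s ^ n := by ring
    calc ‖(volterraOperator L ^ (n + 1)) f t‖
        = ‖∫ s in (0 : ℝ)..t, pathExt (pointwiseApply ℝ I F F L fₙ) s‖ := by rw [pow_succ']; rfl
      _ ≤ ∫ s in (0 : ℝ)..t, ‖L‖ ^ (n + 1) / n ! * ‖f‖ * s ^ n :=
          intervalIntegral.norm_integral_le_of_norm_le t.2.1 (.of_forall integrand_le)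
            (Continuous.intervalIntegrable (by fun_prop) _ _)
      _ = ‖L‖ ^ (n + 1) / (n + 1)! * ‖f‖ * (t : ℝ) ^ (n + 1) := by
          rw [intervalIntegral.integral_const_mul, integral_pow, Nat.factorial_succ]
          push_cast
          field_simp
          simp

theorem norm_volterraOperator_pow_le (L : C(I, F →L[ℝ] F)) (n : ℕ) :
    ‖volterraOperator L ^ n‖ ≤ ‖L‖ ^ n / n ! := by
  refine ContinuousLinearMap.opNorm_le_bound _ (by positivity) fun f => ?_
  rw [ContinuousMap.norm_le _ (by positivity)]
  exact fun t => (norm_volterraOperator_pow_apply_le L n f t).trans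
    (mul_le_of_le_one_right (by positivity) (pow_le_one₀ t.2.1 t.2.2))

theorem isUnit_one_sub_volterraOperator [CompleteSpace F] (L : C(I, F →L[ℝ] F)) :
    IsUnit (1 - volterraOperator L) :=
  isUnit_one_sub_of_norm_pow_le (R := C(I, F) →L[ℝ] C(I, F))
    (Real.summable_pow_div_factorial ‖L‖) (norm_volterraOperator_pow_le L)

/-- The solution of the linear differential equation `x' = L x`, `x(0) = x₀` on `[0,1]`, namely
`(1 - V_L)⁻¹ x₀` with `V_L` the Volterra operator of `L` and `x₀` regarded as a constant path. -/
noncomputable def linearODESolution (L : C(I, F →L[ℝ] F)) (x₀ : F) : C(I, F) :=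
  Ring.inverse (1 - volterraOperator L) (ContinuousMap.const I x₀)

theorem contDiff_linearODESolution [CompleteSpace F] {n : WithTop ℕ∞} (x₀ : F) :
    ContDiff ℝ n fun L : C(I, F →L[ℝ] F) => linearODESolution L x₀ := by
  have one_sub_contDiff : ContDiff ℝ n fun L : C(I, F →L[ℝ] F) => 1 - volterraOperator L := by
    unfold volterraOperator
    fun_prop
  refine ContDiff.clm_apply (contDiff_iff_contDiffAt.2 fun L => ?_) contDiff_const
  have inverse_contDiffAt := contDiffAt_ringInverse (R := C(I, F) →L[ℝ] C(I, F)) ℝ (n := n)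
    (isUnit_one_sub_volterraOperator L).unit
  exact inverse_contDiffAt.comp L one_sub_contDiff.contDiffAt

theorem linearODESolution_apply [CompleteSpace F] (L : C(I, F →L[ℝ] F)) (x₀ : F) (t : I) :
    linearODESolution L x₀ t =
      x₀ + ∫ s in (0 : ℝ)..t, pathExt (pointwiseApply ℝ I F F L (linearODESolution L x₀)) s := by
  have volterra_eq :
      (1 - volterraOperator L) (linearODESolution L x₀) = ContinuousMap.const I x₀ :=
    congr($(Ring.mul_inverse_cancel _ (isUnit_one_sub_volterraOperator L)) (.const I x₀))
  exact sub_eq_iff_eq_add.1 congr($volterra_eq t)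

theorem pathExt_linearODESolution_zero [CompleteSpace F] (L : C(I, F →L[ℝ] F)) (x₀ : F) :
    pathExt (linearODESolution L x₀) 0 = x₀ := by
  simpa using (pathExt_coe _ 0).trans (linearODESolution_apply L x₀ 0)

theorem isIntegralCurveOn_linearODESolution [CompleteSpace F] (L : C(I, F →L[ℝ] F)) (x₀ : F) :
    IsIntegralCurveOn (pathExt (linearODESolution L x₀)) (fun t x => pathExt L t x) I := by
  intro t ht
  let f := pointwiseApply ℝ I F F L (linearODESolution L x₀)
  have integral_hasDerivAt : HasDerivAt (fun t => x₀ + ∫ s in (0 : ℝ)..t, pathExt f s)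
      (pathExt f t) t :=
    ((continuous_pathExt f).integral_hasStrictDerivAt 0 t).hasDerivAt.const_add x₀
  have solution_eq (s : ℝ) (hs : s ∈ I) :
      pathExt (linearODESolution L x₀) s = x₀ + ∫ s in (0 : ℝ)..s, pathExt f s := by
    lift s to I using hs
    rw [pathExt_coe, linearODESolution_apply]
  have apply_eq : pathExt f t = pathExt L t (pathExt (linearODESolution L x₀) t) := by
    lift t to I using ht
    simp [f]
  exact (integral_hasDerivAt.hasDerivWithinAt.congr solution_eq (solution_eq t ht)).congr_deriv
    apply_eq

theorem eqOn_of_isIntegralCurveOn_linear {L : C(I, F →L[ℝ] F)} {x y : ℝ → F}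
    (hx : IsIntegralCurveOn x (fun t x => pathExt L t x) I)
    (hy : IsIntegralCurveOn y (fun t x => pathExt L t x) I) (h₀ : x 0 = y 0) :
    Set.EqOn x y I := by
  have lipschitz (t : ℝ) : LipschitzWith ‖L‖₊ (fun x : F => pathExt L t x) :=
    (pathExt L t).lipschitz.weaken (norm_pathExt_le L t)
  have right_deriv {z : ℝ → F} (hz : IsIntegralCurveOn z (fun t x => pathExt L t x) I) (t : ℝ)
      (ht : t ∈ Set.Ico (0 : ℝ) 1) : HasDerivWithinAt z (pathExt L t (z t)) (Set.Ici t) t :=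
    (hz t (Set.Ico_subset_Icc_self ht)).mono_of_mem_nhdsWithin (Icc_mem_nhdsGE_of_mem ht)
  exact ODE_solution_unique lipschitz hx.continuousOn (right_deriv hx) hy.continuousOn
    (right_deriv hy) h₀

end LinearODE

section Propagator

variable {R : Type*} [NormedRing R] [NormedAlgebra ℝ R]

variable (R) in
/-- The path of left multiplications `x ↦ a(t) x` defined by a path `a` in an algebra. -/
noncomputable def leftMulPath : C(I, R) →L[ℝ] C(I, R →L[ℝ] R) :=
  (ContinuousLinearMap.mul ℝ R).compLeftContinuous ℝ I

variable (R) in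
/-- The path of right multiplications `x ↦ x a(t)` defined by a path `a` in an algebra. -/
noncomputable def rightMulPath : C(I, R) →L[ℝ] C(I, R →L[ℝ] R) :=
  (ContinuousLinearMap.mul ℝ R).flip.compLeftContinuous ℝ I

/-- The solution of `A' = a A`, `A(0) = 1` on `[0,1]` in a Banach algebra. -/
noncomputable def propagator (a : C(I, R)) : C(I, R) :=
  linearODESolution (leftMulPath R a) 1

/-- The solution of `C' = -C a`, `C(0) = 1` on `[0,1]` in a Banach algebra: the pointwise inverse of
the propagator of `a`. -/
noncomputable def propagatorInv (a : C(I, R)) : C(I, R) :=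
  linearODESolution (-rightMulPath R a) 1

variable [CompleteSpace R]

theorem contDiff_propagator {n : WithTop ℕ∞} : ContDiff ℝ n (propagator : C(I, R) → C(I, R)) :=
  (contDiff_linearODESolution 1).comp (f := leftMulPath R) (by fun_prop)

theorem contDiff_propagatorInv {n : WithTop ℕ∞} :
    ContDiff ℝ n (propagatorInv : C(I, R) → C(I, R)) :=
  (contDiff_linearODESolution 1).comp (f := fun a => -rightMulPath R a) (by fun_prop)

theorem hasDerivWithinAt_propagator (a : C(I, R)) {t : ℝ} (ht : t ∈ I) :
    HasDerivWithinAt (pathExt (propagator a)) (pathExt a t * pathExt (propagator a) t) I t :=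
  isIntegralCurveOn_linearODESolution (leftMulPath R a) 1 t ht

theorem hasDerivWithinAt_propagatorInv (a : C(I, R)) {t : ℝ} (ht : t ∈ I) :
    HasDerivWithinAt (pathExt (propagatorInv a)) (-(pathExt (propagatorInv a) t * pathExt a t))
      I t :=
  isIntegralCurveOn_linearODESolution (-rightMulPath R a) 1 t ht

theorem propagatorInv_mul_propagator (a : C(I, R)) : propagatorInv a * propagator a = 1 := by
  have product_curve : IsIntegralCurveOn
      (fun t => pathExt (propagatorInv a) t * pathExt (propagator a) t)
      (fun t x => pathExt (0 : C(I, R →L[ℝ] R)) t x) I := fun t ht =>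
    ((hasDerivWithinAt_propagatorInv a ht).mul (hasDerivWithinAt_propagator a ht)).congr_deriv <| by
      change _ = (0 : R)
      noncomm_ring
  have one_curve : IsIntegralCurveOn (fun _ => (1 : R))
      (fun t x => pathExt (0 : C(I, R →L[ℝ] R)) t x) I := fun t _ => hasDerivWithinAt_const t I 1
  ext t
  simpa using eqOn_of_isIntegralCurveOn_linear product_curve one_curve
    (by simp [propagator, propagatorInv, pathExt_linearODESolution_zero]) t.2

theorem propagator_mul_propagatorInv (a : C(I, R)) : propagator a * propagatorInv a = 1 := by
  -- Both sides solve the linear equation `D' = a D - D a`.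
  have product_curve : IsIntegralCurveOn
      (fun t => pathExt (propagator a) t * pathExt (propagatorInv a) t)
      (fun t x => pathExt (leftMulPath R a - rightMulPath R a) t x) I := fun t ht =>
    ((hasDerivWithinAt_propagator a ht).mul (hasDerivWithinAt_propagatorInv a ht)).congr_deriv <| by
      change _ = pathExt a t * (_ * _) - _ * _ * pathExt a t
      noncomm_ring
  have one_curve : IsIntegralCurveOn (fun _ => (1 : R))
      (fun t x => pathExt (leftMulPath R a - rightMulPath R a) t x) I := fun t _ =>
    (hasDerivWithinAt_const t I (1 : R)).congr_deriv <| by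
      change 0 = pathExt a t * 1 - 1 * pathExt a t
      simp
  ext t
  simpa using eqOn_of_isIntegralCurveOn_linear product_curve one_curve
    (by simp [propagator, propagatorInv, pathExt_linearODESolution_zero]) t.2

theorem ringInverse_propagator_apply (a : C(I, R)) (t : I) :
    Ring.inverse (propagator a t) = propagatorInv a t :=
  Ring.inverse_unit ⟨propagator a t, propagatorInv a t,
    congr($(propagator_mul_propagatorInv a) t), congr($(propagatorInv_mul_propagator a) t)⟩

end Propagator

section Transport

variable {g : Type*} [NormedAddCommGroup g] [NormedSpace ℝ g] [FiniteDimensional ℝ g]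

/-- The path of adjoint endomorphisms `t ↦ ad (γ t)`, depending linearly on the path `γ`. -/
noncomputable def adPath (B : g →ₗ[ℝ] g →ₗ[ℝ] g) : C(I, g) →L[ℝ] C(I, g →L[ℝ] g) :=
  B.toContinuousBilinearMap.compLeftContinuous ℝ I

theorem isTransport_propagator (B : g →ₗ[ℝ] g →ₗ[ℝ] g) (γ : C(I, g)) :
    IsTransport B (pathExt γ) (pathExt (propagator (adPath B γ))) := by
  have : CompleteSpace g := FiniteDimensional.complete ℝ g
  exact ⟨pathExt_linearODESolution_zero _ 1, fun _ ht => hasDerivWithinAt_propagator _ ht,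
    (continuous_pathExt (adPath B γ * propagator (adPath B γ))).continuousOn⟩

theorem isTransport_transport_s5 {B : g →ₗ[ℝ] g →ₗ[ℝ] g} {γ : ℝ → g}
    (h : ∃ A, IsTransport B γ A) : IsTransport B γ (transport B γ) := by
  rw [transport, dif_pos h]
  exact h.choose_spec

theorem IsTransport.eqOn_s5 {B : g →ₗ[ℝ] g →ₗ[ℝ] g} {γ : C(I, g)} {A A' : ℝ → g →L[ℝ] g}
    (hA : IsTransport B (pathExt γ) A) (hA' : IsTransport B (pathExt γ) A') :
    Set.EqOn A A' I :=
  eqOn_of_isIntegralCurveOn_linear (L := leftMulPath _ (adPath B γ)) hA.2.1 hA'.2.1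
    (hA.1.trans hA'.1.symm)

theorem transport_pathExt_apply (B : g →ₗ[ℝ] g →ₗ[ℝ] g) (γ : C(I, g)) (t : I) :
    transport B (pathExt γ) t = propagator (adPath B γ) t := by
  have propagator_isTransport := isTransport_propagator B γ
  simpa using (isTransport_transport_s5 ⟨_, propagator_isTransport⟩).eqOn_s5 propagator_isTransport t.2

end Transport

theorem pathGroup_smooth_general {g : Type*}
    [NormedAddCommGroup g] [NormedSpace ℝ g] [FiniteDimensional ℝ g]
    (B : g →ₗ[ℝ] g →ₗ[ℝ] g) :
    ∃ (mul : C(I, g) × C(I, g) → C(I, g)) (inv : C(I, g) → C(I, g)),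
      (∀ γ δ : C(I, g), ∀ t, mul (γ, δ) t = pathMul B γ δ t) ∧
      (∀ γ : C(I, g), ∀ t, inv γ t = pathInv B γ t) ∧
      ContDiff ℝ ω mul ∧ ContDiff ℝ ω inv := by
  have : CompleteSpace g := FiniteDimensional.complete ℝ g
  refine ⟨fun p => p.1 + pointwiseApply ℝ I g g (propagator (adPath B p.1)) p.2,
    fun γ => -pointwiseApply ℝ I g g (propagatorInv (adPath B γ)) γ,
    fun γ δ t => ?_, fun γ t => ?_, ?_, ?_⟩
  · rw [pathMul, transport_pathExt_apply]
    rfl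
  · rw [pathInv, transport_pathExt_apply, ringInverse_propagator_apply]
    rfl
  · have propagator_smooth :
        ContDiff ℝ ω fun p : C(I, g) × C(I, g) => propagator (adPath B p.1) :=
      contDiff_propagator.comp (f := fun p : C(I, g) × C(I, g) => adPath B p.1) (by fun_prop)
    fun_prop
  · have propagatorInv_smooth : ContDiff ℝ ω fun γ : C(I, g) => propagatorInv (adPath B γ) :=
      contDiff_propagatorInv.comp (f := adPath B) (by fun_prop)
    fun_prop

/-- The multiplication `(γ, δ) ↦ γ·δ` and inversion `γ ↦ ι(γ)` of the path group
`P(g) = C([0,1], g)` (a Banach space with the supremum norm) are infinitely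
differentiable maps of Banach spaces; in particular `P(g)` is a Banach Lie group. -/
theorem pathGroup_smooth {g : Type*}
    [NormedAddCommGroup g] [NormedSpace ℝ g] [FiniteDimensional ℝ g]
    (B : g →ₗ[ℝ] g →ₗ[ℝ] g) (hB : IsLieBracket B) :
    ∃ (mul : C(Set.Icc (0:ℝ) 1, g) × C(Set.Icc (0:ℝ) 1, g) → C(Set.Icc (0:ℝ) 1, g))
      (inv : C(Set.Icc (0:ℝ) 1, g) → C(Set.Icc (0:ℝ) 1, g)),
      (∀ γ δ : C(Set.Icc (0:ℝ) 1, g), ∀ t, mul (γ, δ) t = pathMul B γ δ t) ∧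
      (∀ γ : C(Set.Icc (0:ℝ) 1, g), ∀ t, inv γ t = pathInv B γ t) ∧
      ContDiff ℝ (⊤ : ℕ∞) mul ∧ ContDiff ℝ (⊤ : ℕ∞) inv := by
  obtain ⟨mul, inv, mul_eq, inv_eq, mul_smooth, inv_smooth⟩ := pathGroup_smooth_general B
  exact ⟨mul, inv, mul_eq, inv_eq, mul_smooth.of_le le_top, inv_smooth.of_le le_top⟩
end
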